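/- Let P be a vector space over a field K of characteristic not 2 or 3, with a bilinear multiplication ·. Define {X,Y} = (X·Y - Y·X)/2 and X∙Y = (X·Y + Y·X)/2. Then (P, {,}, ∙) is a Poisson algebra (i.e., {,} is a Lie bracket, ∙ is commutative associative, and the Leibniz rule {X∙Y,Z} = X∙{Y,Z} + {X,Z}∙Y holds) if and only if the associator A(X,Y,Z) = (X·Y)·Z - X·(Y·Z) satisfies 3A(X,Y,Z) = (X·Z)·Y + (Y·Z)·X - (Y·X)·Z - (Z·X)·Y for all X,Y,Z. -/

import Mathlib

/-!
The Leibniz defect is a combination of the sums `A(X,Y,Z) + A(Z,Y,X)`, and the Leibniz rule says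
exactly that they vanish, i.e. that `·` is flexible. Up to the factor `1 / 4`, for a flexible
multiplication the Jacobi sum is twice the cyclic sum `A(X,Y,Z) + A(Y,Z,X) + A(Z,X,Y)`, and the
associator of `∙` is the difference of the two sides of the admissibility identity minus the same
cyclic sum. So the Poisson axioms imply admissibility. Conversely, the right-hand side of the
admissibility identity is antisymmetric under `X ↔ Z` and has vanishing cyclic sum; dividing by
`3`, `A` inherits both properties.
-/

variable {K : Type*} [Field K] {P : Type*} [AddCommGroup P] [Module K P]

/-- The associator of a bilinear multiplication. -/
def assocOf (m : P →ₗ[K] P →ₗ[K] P) (X Y Z : P) : P := m (m X Y) Z - m X (m Y Z)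

/-- Admissible Poisson algebra condition:
`3 A(X,Y,Z) = (X·Z)·Y + (Y·Z)·X - (Y·X)·Z - (Z·X)·Y`. -/
def IsAdmissible (m : P →ₗ[K] P →ₗ[K] P) : Prop :=
  ∀ X Y Z : P, (3 : ℤ) • assocOf m X Y Z =
    m (m X Z) Y + m (m Y Z) X - m (m Y X) Z - m (m Z X) Y

/-- The antisymmetrized bracket `{X,Y} = (X·Y - Y·X)/2`. -/
def brOf (m : P →ₗ[K] P →ₗ[K] P) (X Y : P) : P := (2 : K)⁻¹ • (m X Y - m Y X)

/-- The symmetrized product `X∙Y = (X·Y + Y·X)/2`. -/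
def bulOf (m : P →ₗ[K] P →ₗ[K] P) (X Y : P) : P := (2 : K)⁻¹ • (m X Y + m Y X)

/-- Flexibility of a multiplication, in the linearized form `A(X,Y,Z) + A(Z,Y,X) = 0` of
`A(X,Y,X) = 0`; it is the form that the Leibniz rule takes in terms of the single product. -/
def IsFlexible (m : P →ₗ[K] P →ₗ[K] P) : Prop :=
  ∀ X Y Z : P, assocOf m X Y Z + assocOf m Z Y X = 0

/-- The cyclic sum `A(X,Y,Z) + A(Y,Z,X) + A(Z,X,Y)` of the associator, which measures the failure
of the Jacobi identity when the multiplication is flexible. -/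
def cyclicAssoc (m : P →ₗ[K] P →ₗ[K] P) (X Y Z : P) : P :=
  assocOf m X Y Z + assocOf m Y Z X + assocOf m Z X Y

section Identities

variable (m : P →ₗ[K] P →ₗ[K] P) (X Y Z : P)

theorem brOf_brOf :
    brOf m (brOf m X Y) Z =
      ((2 : K)⁻¹ ^ 2) • (m (m X Y) Z - m (m Y X) Z - m Z (m X Y) + m Z (m Y X)) := by
  simp only [brOf, map_sub, map_smul, LinearMap.sub_apply, LinearMap.smul_apply]
  module

theorem jacobi_sum_eq :
    brOf m (brOf m X Y) Z + brOf m (brOf m Y Z) X + brOf m (brOf m Z X) Y =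
      ((2 : K)⁻¹ ^ 2) • (cyclicAssoc m X Y Z - cyclicAssoc m Z Y X) := by
  simp only [brOf_brOf, cyclicAssoc, assocOf]
  module

theorem leibniz_defect_eq :
    brOf m (bulOf m X Y) Z - (bulOf m X (brOf m Y Z) + bulOf m (brOf m X Z) Y) =
      ((2 : K)⁻¹ ^ 2) • ((assocOf m X Y Z + assocOf m Z Y X) +
        (assocOf m Y X Z + assocOf m Z X Y) - (assocOf m X Z Y + assocOf m Y Z X)) := by
  simp only [brOf, bulOf, assocOf, map_add, map_sub, map_smul, LinearMap.add_apply,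
    LinearMap.sub_apply, LinearMap.smul_apply]
  module

theorem bulOf_associator_eq :
    bulOf m (bulOf m X Y) Z - bulOf m X (bulOf m Y Z) =
      ((2 : K)⁻¹ ^ 2) • ((3 : ℤ) • assocOf m X Y Z -
        (m (m X Z) Y + m (m Y Z) X - m (m Y X) Z - m (m Z X) Y) - cyclicAssoc m X Y Z -
        (assocOf m X Y Z + assocOf m Z Y X) + (assocOf m X Z Y + assocOf m Y Z X)) := by
  simp only [bulOf, cyclicAssoc, assocOf, map_add, map_smul, LinearMap.add_apply,
    LinearMap.smul_apply]
  module

end Identities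

variable {m : P →ₗ[K] P →ₗ[K] P}

theorem leibniz_iff_isFlexible (h2 : (2 : K) ≠ 0) :
    (∀ X Y Z : P, brOf m (bulOf m X Y) Z = bulOf m X (brOf m Y Z) + bulOf m (brOf m X Z) Y) ↔
      IsFlexible m := by
  have hc : (2 : K)⁻¹ ^ 2 ≠ 0 := pow_ne_zero 2 (inv_ne_zero h2)
  simp only [← sub_eq_zero (a := brOf m _ _), leibniz_defect_eq, smul_eq_zero_iff_right hc]
  refine ⟨fun hL X Y Z ↦ ?_, fun hf X Y Z ↦ ?_⟩
  · -- Only the term with `Y` in the middle has the same sign in both defects.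
    refine (smul_eq_zero_iff_right h2).1 ?_
    linear_combination (norm := module) hL X Y Z + hL Y Z X
  · rw [hf X Y Z, hf Y X Z, hf X Z Y, add_zero, sub_zero]

theorem IsFlexible.cyclicAssoc_reverse (hf : IsFlexible m) (X Y Z : P) :
    cyclicAssoc m Z Y X = -cyclicAssoc m X Y Z := by
  unfold cyclicAssoc
  linear_combination (norm := module) hf X Y Z + hf Y Z X + hf Z X Y

theorem IsFlexible.jacobi_iff (hf : IsFlexible m) (h2 : (2 : K) ≠ 0) :
    (∀ X Y Z : P,
        brOf m (brOf m X Y) Z + brOf m (brOf m Y Z) X + brOf m (brOf m Z X) Y = 0) ↔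
      ∀ X Y Z : P, cyclicAssoc m X Y Z = 0 := by
  have hc : (2 : K)⁻¹ ^ 2 ≠ 0 := pow_ne_zero 2 (inv_ne_zero h2)
  refine forall₃_congr fun X Y Z ↦ ?_
  rw [jacobi_sum_eq, hf.cyclicAssoc_reverse X Y Z, sub_neg_eq_add, ← two_smul K,
    smul_eq_zero_iff_right hc, smul_eq_zero_iff_right h2]

theorem IsFlexible.bulOf_assoc_iff (hf : IsFlexible m) (h2 : (2 : K) ≠ 0)
    (hcyc : ∀ X Y Z : P, cyclicAssoc m X Y Z = 0) :
    (∀ X Y Z : P, bulOf m (bulOf m X Y) Z = bulOf m X (bulOf m Y Z)) ↔ IsAdmissible m := by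
  have hc : (2 : K)⁻¹ ^ 2 ≠ 0 := pow_ne_zero 2 (inv_ne_zero h2)
  simp only [← sub_eq_zero (a := bulOf m _ _), bulOf_associator_eq, hcyc, hf _ _ _, sub_zero,
    add_zero, smul_eq_zero_iff_right hc, sub_eq_zero (a := (3 : ℤ) • _), IsAdmissible]

theorem IsAdmissible.isFlexible (hm : IsAdmissible m) (h3 : (3 : K) ≠ 0) : IsFlexible m := by
  intro X Y Z
  refine (smul_eq_zero_iff_right h3).1 ?_
  linear_combination (norm := module) hm X Y Z + hm Z Y X

theorem IsAdmissible.cyclicAssoc_eq_zero (hm : IsAdmissible m) (h3 : (3 : K) ≠ 0) (X Y Z : P) :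
    cyclicAssoc m X Y Z = 0 := by
  refine (smul_eq_zero_iff_right h3).1 ?_
  unfold cyclicAssoc
  linear_combination (norm := module) hm X Y Z + hm Y Z X + hm Z X Y

/-- `(P, {,}, ∙)` is a Poisson algebra (Jacobi for the bracket,
associativity for the symmetric product, Leibniz rule) if and only if the
multiplication `·` satisfies the admissibility identity for the associator. -/
theorem stmt0 (h2 : (2 : K) ≠ 0) (h3 : (3 : K) ≠ 0) (m : P →ₗ[K] P →ₗ[K] P) :
    ((∀ X Y Z : P,
        brOf m (brOf m X Y) Z + brOf m (brOf m Y Z) X + brOf m (brOf m Z X) Y = 0) ∧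
      (∀ X Y Z : P, bulOf m (bulOf m X Y) Z = bulOf m X (bulOf m Y Z)) ∧
      (∀ X Y Z : P,
        brOf m (bulOf m X Y) Z = bulOf m X (brOf m Y Z) + bulOf m (brOf m X Z) Y)) ↔
      IsAdmissible m := by
  constructor
  · rintro ⟨hJ, hA, hL⟩
    have hf : IsFlexible m := (leibniz_iff_isFlexible h2).1 hL
    exact (hf.bulOf_assoc_iff h2 ((hf.jacobi_iff h2).1 hJ)).1 hA
  · intro hm
    have hf : IsFlexible m := hm.isFlexible h3
    have hcyc : ∀ X Y Z : P, cyclicAssoc m X Y Z = 0 := hm.cyclicAssoc_eq_zero h3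
    exact ⟨(hf.jacobi_iff h2).2 hcyc, (hf.bulOf_assoc_iff h2 hcyc).2 hm,
      (leibniz_iff_isFlexible h2).2 hf⟩
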